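/- arXiv:2205.15557 — 2 statements merged into one kernel-verified Lean document; each statement's English description precedes it below -/
import Mathlib

section
/- Let L : ℕ → ℝ with L(0) = 0 and L(t) ≥ 0 for all t, let h, g : ℕ → ℝ, and let B ∈ ℝ, h' ∈ ℝ, h₀ ∈ ℝ, ε > 0, V ≥ 0 be such that (i) L(t+1) − L(t) + V·h(t) ≤ B − ε·g(t) + V·h' for all t ∈ ℕ, and (ii) (1/T)·Σ_{t=0}^{T−1} h(t) ≥ h₀ for every integer T ≥ 1. Then for every integer T ≥ 1, (1/T)·Σ_{t=0}^{T−1} g(t) ≤ B/ε + V·(h' − h₀)/ε. -/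
open Finset

section OrderedRing

variable {R : Type*} [Ring R] [PartialOrder R] [IsOrderedAddMonoid R]

theorem sum_drift_add_penalty_le {L h g : ℕ → R} {B h' ε V : R} {T : ℕ}
    (hdrift : ∀ t < T, L (t + 1) - L t + V * h t ≤ B - ε * g t + V * h') :
    L T - L 0 + V * ∑ t ∈ range T, h t ≤
      T * B - ε * ∑ t ∈ range T, g t + T * (V * h') := by
  calc L T - L 0 + V * ∑ t ∈ range T, h t
      = ∑ t ∈ range T, (L (t + 1) - L t + V * h t) := by
        rw [sum_add_distrib, sum_range_sub, mul_sum]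
    _ ≤ ∑ t ∈ range T, (B - ε * g t + V * h') :=
        sum_le_sum fun t ht => hdrift t (mem_range.mp ht)
    _ = T * B - ε * ∑ t ∈ range T, g t + T * (V * h') := by
        simp only [sum_add_distrib, sum_sub_distrib, sum_const, card_range, nsmul_eq_mul, mul_sum]

end OrderedRing

section OrderedField

variable {K : Type*} [Field K] [LinearOrder K] [IsStrictOrderedRing K]
  {L h g : ℕ → K} {B h' h₀ ε V : K} {T : ℕ}

theorem mul_average_backlog_le (hT : 1 ≤ T)
    (hdrift : ∀ t < T, L (t + 1) - L t + V * h t ≤ B - ε * g t + V * h') :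
    ε * ((1 / (T : K)) * ∑ t ∈ range T, g t) ≤
      B + V * (h' - (1 / (T : K)) * ∑ t ∈ range T, h t) + (L 0 - L T) / T := by
  have hsum : ε * ∑ t ∈ range T, g t ≤
      T * B + V * (T * h' - ∑ t ∈ range T, h t) + (L 0 - L T) := by
    linarith [sum_drift_add_penalty_le hdrift]
  calc ε * ((1 / (T : K)) * ∑ t ∈ range T, g t)
      = (ε * ∑ t ∈ range T, g t) / T := by ring
    _ ≤ (T * B + V * (T * h' - ∑ t ∈ range T, h t) + (L 0 - L T)) / T := by gcongr
    _ = B + V * (h' - (1 / (T : K)) * ∑ t ∈ range T, h t) + (L 0 - L T) / T := by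
        have : (T : K) ≠ 0 := Nat.cast_ne_zero.mpr (Nat.one_le_iff_ne_zero.mp hT)
        field_simp

theorem backlog_performance_general (hε : 0 < ε) (hV : 0 ≤ V) (hT : 1 ≤ T) (hLT : 0 ≤ L T)
    (hdrift : ∀ t < T, L (t + 1) - L t + V * h t ≤ B - ε * g t + V * h')
    (hcost : h₀ ≤ (1 / (T : K)) * ∑ t ∈ range T, h t) :
    (1 / (T : K)) * ∑ t ∈ range T, g t ≤ B / ε + V * (h' - h₀) / ε + L 0 / (ε * T) := by
  have hbound : ε * ((1 / (T : K)) * ∑ t ∈ range T, g t) ≤ B + V * (h' - h₀) + L 0 / T := by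
    refine (mul_average_backlog_le hT hdrift).trans ?_
    gcongr
    exact sub_le_self _ hLT
  calc (1 / (T : K)) * ∑ t ∈ range T, g t
      ≤ (B + V * (h' - h₀) + L 0 / T) / ε := (le_div_iff₀' hε).mpr hbound
    _ = B / ε + V * (h' - h₀) / ε + L 0 / (ε * T) := by
        rw [add_div, add_div, div_div, mul_comm (T : K)]

end OrderedField

/-- Queue-backlog guarantee via telescoping the drift-plus-penalty bound:
the time-averaged backlog `g` is at most `B/ε + V·(h' − h₀)/ε`. -/
theorem backlog_performance (L : ℕ → ℝ) (hL0 : L 0 = 0) (hL : ∀ t, 0 ≤ L t)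
    (h g : ℕ → ℝ) (B h' h₀ ε V : ℝ) (hε : 0 < ε) (hV : 0 ≤ V)
    (hdrift : ∀ t : ℕ, L (t + 1) - L t + V * h t ≤ B - ε * g t + V * h')
    (hcost : ∀ T : ℕ, 1 ≤ T → h₀ ≤ (1 / (T : ℝ)) * ∑ t ∈ Finset.range T, h t) :
    ∀ T : ℕ, 1 ≤ T →
      (1 / (T : ℝ)) * ∑ t ∈ Finset.range T, g t ≤ B / ε + V * (h' - h₀) / ε := by
  intro T hT
  simpa only [hL0, zero_div, add_zero] using
    backlog_performance_general hε hV hT (hL T) (fun t _ => hdrift t) (hcost T hT)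
end

section
/- Let a : ℕ → ℝ be a sequence with a(t) ≥ 0 for all t, and suppose there exist constants A ≥ 0 and M ≥ 0 such that a(t+1) ≤ a(t) + A for all t and (1/T)·Σ_{t=0}^{T−1} a(t) ≤ M for every integer T ≥ 1. Then a(T)/T → 0 as T → ∞. -/
/-!
The square of the backlog serves as a Lyapunov function. Squaring `a (t + 1) ≤ a t + A` and
summing over `t < T` gives `a T ^ 2 ≤ a 0 ^ 2 + 2 * A * ∑ t < T, a t + A ^ 2 * T`. A backlog whose
partial sums are `o(T ^ 2)`, in particular one with bounded time averages, therefore satisfies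
`a T ^ 2 = o(T ^ 2)`.
-/

open Filter Asymptotics

theorem sq_le_of_bounded_increments {R : Type*} [CommSemiring R] [PartialOrder R] [IsOrderedRing R]
    {a : ℕ → R} {A : R} (ha : ∀ t, 0 ≤ a t) (hstep : ∀ t, a (t + 1) ≤ a t + A) (T : ℕ) :
    a T ^ 2 ≤ a 0 ^ 2 + 2 * A * ∑ t ∈ Finset.range T, a t + A ^ 2 * T := by
  induction T with
  | zero => simp
  | succ T ih =>
    calc a (T + 1) ^ 2 ≤ (a T + A) ^ 2 := pow_le_pow_left₀ (ha _) (hstep T) 2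
      _ = a T ^ 2 + (2 * A * a T + A ^ 2) := by ring
      _ ≤ (a 0 ^ 2 + 2 * A * ∑ t ∈ Finset.range T, a t + A ^ 2 * T) + (2 * A * a T + A ^ 2) := by
        gcongr
      _ = a 0 ^ 2 + 2 * A * ∑ t ∈ Finset.range (T + 1), a t + A ^ 2 * (T + 1 : ℕ) := by
        rw [Finset.sum_range_succ]
        push_cast
        ring

theorem isLittleO_natCast_sq :
    (fun T : ℕ => (T : ℝ)) =o[atTop] fun T : ℕ => (T : ℝ) ^ 2 := by
  simpa only [Function.comp_def, pow_one] using
    (isLittleO_pow_pow_atTop_of_lt (𝕜 := ℝ) one_lt_two).comp_tendsto tendsto_natCast_atTop_atTop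

theorem isBigO_natCast_of_one_div_mul_le {f : ℕ → ℝ} {M : ℝ} (hf : ∀ T, 0 ≤ f T)
    (hM : ∀ᶠ T : ℕ in atTop, 1 / (T : ℝ) * f T ≤ M) :
    f =O[atTop] fun T : ℕ => (T : ℝ) := by
  refine IsBigO.of_bound M ?_
  filter_upwards [hM, eventually_gt_atTop 0] with T hT hT_pos
  rw [Real.norm_of_nonneg (hf T), Real.norm_natCast, mul_comm]
  rwa [one_div, inv_mul_le_iff₀ (Nat.cast_pos.2 hT_pos)] at hT

theorem mean_rate_stability_general {a : ℕ → ℝ} {A : ℝ} (ha : ∀ t, 0 ≤ a t)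
    (hstep : ∀ t, a (t + 1) ≤ a t + A)
    (hsum : (fun T : ℕ => ∑ t ∈ Finset.range T, a t) =o[atTop] fun T : ℕ => (T : ℝ) ^ 2) :
    a =o[atTop] fun T : ℕ => (T : ℝ) := by
  have hconst : (fun _ : ℕ => a 0 ^ 2) =o[atTop] fun T : ℕ => (T : ℝ) ^ 2 :=
    isLittleO_const_left.2 <| .inr <| tendsto_norm_atTop_atTop.comp <|
      (tendsto_pow_atTop two_ne_zero).comp tendsto_natCast_atTop_atTop
  have hdrift : (fun T => a T ^ 2) =O[atTop]
      fun T : ℕ => a 0 ^ 2 + 2 * A * ∑ t ∈ Finset.range T, a t + A ^ 2 * T :=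
    .of_norm_le fun T => by
      rw [Real.norm_of_nonneg (sq_nonneg (a T))]
      exact sq_le_of_bounded_increments ha hstep T
  have hsq : (fun T => a T ^ 2) =o[atTop] fun T : ℕ => (T : ℝ) ^ 2 :=
    hdrift.trans_isLittleO <|
      (hconst.add (hsum.const_mul_left _)).add (isLittleO_natCast_sq.const_mul_left _)
  exact hsq.of_pow two_ne_zero

/-- Mean-rate stability: if a nonnegative sequence `a` has bounded per-slot
increments and all its time averages are bounded by `M`, then `a T / T → 0`. -/
theorem mean_rate_stability (a : ℕ → ℝ) (ha : ∀ t, 0 ≤ a t)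
    (A M : ℝ) (hA : 0 ≤ A) (hM : 0 ≤ M)
    (hstep : ∀ t : ℕ, a (t + 1) ≤ a t + A)
    (havg : ∀ T : ℕ, 1 ≤ T → (1 / (T : ℝ)) * ∑ t ∈ Finset.range T, a t ≤ M) :
    Filter.Tendsto (fun T : ℕ => a T / (T : ℝ)) Filter.atTop (nhds 0) := by
  have hsum : (fun T : ℕ => ∑ t ∈ Finset.range T, a t) =O[atTop] fun T : ℕ => (T : ℝ) :=
    isBigO_natCast_of_one_div_mul_le (fun _ => Finset.sum_nonneg fun t _ => ha t)
      (eventually_atTop.2 ⟨1, havg⟩)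
  exact (mean_rate_stability_general ha hstep
    (hsum.trans_isLittleO isLittleO_natCast_sq)).tendsto_div_nhds_zero
end
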